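/- arXiv:1910.14251 — 3 statements merged into one kernel-verified Lean document; each statement's English description precedes it below -/
import Mathlib

section
/- Let $p$ and $q$ be distinct odd primes, and let $E = \mathbb{Q}(\zeta_p, \zeta_q)$ be the $pq$-th cyclotomic field. Then $1 - \zeta_p$ is not a $q$-th power in $E$; that is, there is no $w \in E$ with $w^q = 1 - \zeta_p$. -/
/-!
The proof compares norms down to `ℚ`. Put `K = ℚ(ζ_p)`. Since `p` is odd, `N_{K/ℚ}(ζ_p - 1) = p`,
and `[E : K] = q - 1`, so `N_{E/ℚ}(ζ_p - 1) = p ^ (q - 1)`. If `w ^ q = 1 - ζ_p` with `w ∈ E`, then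
`(-w) ^ q = ζ_p - 1` because `q` is odd, and `r = N_{E/ℚ}(-w)` is a rational number with
`r ^ q = p ^ (q - 1)`. Taking `p`-adic valuations gives `q ∣ q - 1`, which is absurd.
The equality `[E : K] = q - 1` follows from the degrees of the `pq`-th and `p`-th cyclotomic fields
over `ℚ`.
-/

/-- `ζ_m = e^{2πi/m}`. -/
noncomputable def primRoot (m : ℕ) : ℂ := Complex.exp (2 * (Real.pi : ℂ) * Complex.I / (m : ℂ))

/-- The `pq`-th cyclotomic field `E = ℚ(ζ_p, ζ_q)` as a subfield of `ℂ`. -/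
noncomputable def cycField (p q : ℕ) : IntermediateField ℚ ℂ :=
  IntermediateField.adjoin ℚ ({primRoot p, primRoot q} : Set ℂ)

lemma primRoot_isPrimitiveRoot {m : ℕ} (hm : m ≠ 0) : IsPrimitiveRoot (primRoot m) m :=
  Complex.isPrimitiveRoot_exp m hm

/-- A power of a prime `p` is a `q`-th power in `ℚ` only if `q` divides the exponent. -/
lemma dvd_of_rat_pow_eq_prime_pow {p q n : ℕ} (hp : p.Prime) {r : ℚ}
    (h : r ^ q = (p : ℚ) ^ n) : q ∣ n := by
  have : Fact p.Prime := ⟨hp⟩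
  have hval : (q : ℤ) * padicValRat p r = n := by
    rw [← padicValRat.pow, h, padicValRat.pow, padicValRat.self hp.one_lt, mul_one]
  exact Int.natCast_dvd_natCast.mp ⟨_, hval.symm⟩

/-- If `K` is the `p`-th cyclotomic field and `ζ - 1` becomes a `q`-th power in a finite
extension `L` of `K`, then `q ∣ [L : K]`: take the norm of `ζ - 1` from `L` down to `ℚ`. -/
lemma dvd_finrank_of_pow_eq {K L : Type*} [Field K] [Field L] [CharZero K] [CharZero L]
    [Algebra K L] [FiniteDimensional ℚ K] [FiniteDimensional K L]
    {p q : ℕ} (hp : p.Prime) (hp2 : p ≠ 2) [IsCyclotomicExtension {p} ℚ K]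
    {ζ : K} (hζ : IsPrimitiveRoot ζ p) {w : L} (hw : w ^ q = algebraMap K L (ζ - 1)) :
    q ∣ Module.finrank K L := by
  have : Fact p.Prime := ⟨hp⟩
  have hN : Algebra.norm ℚ (ζ - 1) = p :=
    hζ.norm_sub_one_of_prime_ne_two' (Polynomial.cyclotomic.irreducible_rat hp.pos) hp2
  refine dvd_of_rat_pow_eq_prime_pow hp (r := Algebra.norm ℚ (Algebra.norm K w)) ?_
  rw [← map_pow, ← map_pow, hw, Algebra.norm_algebraMap, map_pow, hN]

/-- For distinct odd primes `p` and `q`, `1 - ζ_p` is not a `q`-th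
power in `E = ℚ(ζ_p, ζ_q)`. -/
theorem one_sub_zeta_p_not_qth_power (p q : ℕ) (hp : p.Prime) (hq : q.Prime)
    (hpo : Odd p) (hqo : Odd q) (hpq : p ≠ q) :
    ¬ ∃ w : ℂ, w ∈ cycField p q ∧ w ^ q = 1 - primRoot p := by
  rintro ⟨w, hw, hwq⟩
  have : NeZero p := ⟨hp.ne_zero⟩
  have : NeZero q := ⟨hq.ne_zero⟩
  have hζp := primRoot_isPrimitiveRoot hp.ne_zero
  have hζq := primRoot_isPrimitiveRoot hq.ne_zero
  let A : IntermediateField ℚ ℂ := IntermediateField.adjoin ℚ {primRoot p}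
  let B : IntermediateField ℚ ℂ := IntermediateField.adjoin ℚ {primRoot q}
  have hAB : cycField p q = A ⊔ B := by
    rw [← IntermediateField.adjoin_union]
    rfl
  have hA : IsCyclotomicExtension {p} ℚ A :=
    (IntermediateField.isCyclotomicExtension_singleton_iff_eq_adjoin p ℚ ℂ A hζp).mpr rfl
  have hB : IsCyclotomicExtension {q} ℚ B :=
    (IntermediateField.isCyclotomicExtension_singleton_iff_eq_adjoin q ℚ ℂ B hζq).mpr rfl
  have hE : IsCyclotomicExtension {p.lcm q} ℚ (A ⊔ B : IntermediateField ℚ ℂ) :=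
    @IntermediateField.isCyclotomicExtension_lcm_sup ℚ ℂ _ _ _ p q A B hA hB _ _
  have hcop : p.Coprime q := (Nat.coprime_primes hp hq).mpr hpq
  rw [hcop.lcm_eq_mul] at hE
  have : FiniteDimensional ℚ A := IsCyclotomicExtension.finite_of_singleton p ℚ A
  have : FiniteDimensional ℚ (A ⊔ B : IntermediateField ℚ ℂ) :=
    IsCyclotomicExtension.finite_of_singleton (p * q) ℚ _
  have dA : Module.finrank ℚ A = p - 1 := by
    rw [IsCyclotomicExtension.finrank (n := p) A (Polynomial.cyclotomic.irreducible_rat hp.pos),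
      Nat.totient_prime hp]
  have dE : Module.finrank ℚ (A ⊔ B : IntermediateField ℚ ℂ) = (p - 1) * (q - 1) := by
    rw [IsCyclotomicExtension.finrank (n := p * q) _
      (Polynomial.cyclotomic.irreducible_rat (Nat.mul_pos hp.pos hq.pos)),
      Nat.totient_mul hcop, Nat.totient_prime hp, Nat.totient_prime hq]
  let φ : A →ₐ[ℚ] (A ⊔ B : IntermediateField ℚ ℂ) := IntermediateField.inclusion le_sup_left
  let _ : Algebra A (A ⊔ B : IntermediateField ℚ ℂ) := φ.toRingHom.toAlgebra
  have : IsScalarTower ℚ A (A ⊔ B : IntermediateField ℚ ℂ) :=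
    IsScalarTower.of_algebraMap_eq fun x => (φ.commutes x).symm
  have : FiniteDimensional A (A ⊔ B : IntermediateField ℚ ℂ) :=
    FiniteDimensional.right ℚ A _
  have dEA : Module.finrank A (A ⊔ B : IntermediateField ℚ ℂ) = q - 1 := by
    have h := Module.finrank_mul_finrank ℚ A (A ⊔ B : IntermediateField ℚ ℂ)
    rw [dA, dE] at h
    exact Nat.eq_of_mul_eq_mul_left (Nat.sub_pos_of_lt hp.one_lt) h
  let z : A := ⟨primRoot p, IntermediateField.mem_adjoin_simple_self ℚ _⟩
  have hz : IsPrimitiveRoot z p := IsPrimitiveRoot.coe_submonoidClass_iff.mp hζp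
  let v : (A ⊔ B : IntermediateField ℚ ℂ) := ⟨-w, neg_mem (hAB ▸ hw)⟩
  have hv : v ^ q = algebraMap A (A ⊔ B : IntermediateField ℚ ℂ) (z - 1) := by
    apply Subtype.ext
    change (-w) ^ q = primRoot p - 1
    rw [hqo.neg_pow, hwq, neg_sub]
  have hp2 : p ≠ 2 := by
    rintro rfl
    exact absurd hpo (by decide)
  have hdvd := dvd_finrank_of_pow_eq hp hp2 hz hv
  rw [dEA] at hdvd
  have := Nat.le_of_dvd (Nat.sub_pos_of_lt hq.one_lt) hdvd
  have := hq.pos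
  omega
end

section
/- Let $p$ and $q$ be distinct odd primes, let $E$ be the $pq$-th cyclotomic field, let $i, j$ be integers with $0 \le i \le p-2$ and $1 \le j \le q-1$, and let $c$ be an integer not divisible by $p$. Then for every field automorphism $\sigma$ of $E$ satisfying $\sigma(\zeta_p) = \zeta_p^c$ and $\sigma(\zeta_q) = \zeta_q$, one has $\sigma(\eta'_{i,j})^{\,c^i} \cdot (\eta'_{i,j})^{-1} \in (E^{\times})^p$; that is, there exists $w \in E^{\times}$ with $\sigma(\eta'_{i,j})^{\,c^i} = \eta'_{i,j} \cdot w^p$. -/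
/-- `η'_{i,j} = ∏_{s=0}^{p-1} (1 - ζ_q^j ζ_p^s)^{s^i}` (with `0^0 = 1`). -/
noncomputable def etaElt' (p q i j : ℕ) : ℂ :=
  ∏ s ∈ Finset.range p, (1 - primRoot q ^ j * primRoot p ^ s) ^ (s ^ i)

theorem zpow_eq_of_zmod_eq {K : Type*} [Field K] {p : ℕ} [NeZero p] {a : K} (ha : a ^ p = 1)
    {m n : ℤ} (h : (m : ZMod p) = n) : a ^ m = a ^ n := by
  have ha0 : a ≠ 0 := by
    rintro rfl
    simp [NeZero.ne p] at ha
  obtain ⟨k, hk⟩ := (ZMod.intCast_eq_intCast_iff_dvd_sub m n p).1 h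
  obtain rfl : n = m + p * k := by linarith
  rw [zpow_add₀ ha0, zpow_mul, zpow_natCast, ha, one_zpow, mul_one]

theorem one_sub_ne_zero {K : Type*} [Field K] {p q j : ℕ} (hp : p.Prime) (hq : q.Prime)
    (hpq : p ≠ q) (hj1 : 1 ≤ j) (hj : j ≤ q - 1) {a b : K} (ha : a ^ p = 1)
    (hb : IsPrimitiveRoot b q) (n : ℕ) : 1 - b ^ j * a ^ n ≠ 0 := by
  intro h
  have h1 : b ^ (j * p) = 1 := by
    have h2 : (b ^ j * a ^ n) ^ p = 1 := by rw [← sub_eq_zero.1 h, one_pow]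
    rwa [mul_pow, ← pow_mul, ← pow_mul, mul_comm n p, pow_mul a, ha, one_pow, mul_one] at h2
  rcases hq.dvd_mul.1 (hb.dvd_of_pow_eq_one _ h1) with h2 | h2
  · have := Nat.le_of_dvd hj1 h2
    have := hq.two_le
    omega
  · exact hpq ((Nat.prime_dvd_prime_iff_eq hq hp).1 h2).symm

/-- The reindexing argument, for an arbitrary nowhere vanishing family `f` on `ℤ/p` that a field
automorphism permutes through multiplication by `c`. -/
theorem exists_eq_mul_pow {K : Type*} [Field K] {p : ℕ} [Fact p.Prime] (i : ℕ) (c : ℤ)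
    (hc : (c : ZMod p) ≠ 0) (σ : K ≃+* K) (f : ZMod p → K) (hf : ∀ t, f t ≠ 0)
    (hσ : ∀ t, σ (f t) = f (c * t)) :
    ∃ w : K, w ≠ 0 ∧
      σ (∏ t, f t ^ (t.val ^ i)) ^ (c ^ i) = (∏ t, f t ^ (t.val ^ i)) * w ^ p := by
  have hdiv : ∀ t : ZMod p, ∃ k : ℤ,
      (t.val : ℤ) ^ i * c ^ i = ((c * t : ZMod p).val : ℤ) ^ i + k * p := by
    intro t
    have h : ((((c * t : ZMod p).val : ℤ) ^ i : ℤ) : ZMod p)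
        = (((t.val : ℤ) ^ i * c ^ i : ℤ) : ZMod p) := by
      push_cast
      rw [ZMod.natCast_zmod_val, ZMod.natCast_zmod_val, mul_pow, mul_comm]
    obtain ⟨k, hk⟩ := (ZMod.intCast_eq_intCast_iff_dvd_sub _ _ p).1 h
    exact ⟨k, by linarith⟩
  choose k hk using hdiv
  refine ⟨∏ t, f (c * t) ^ k t, Finset.prod_ne_zero_iff.2 fun t _ => zpow_ne_zero _ (hf _), ?_⟩
  have hre : ∏ t, f t ^ (t.val ^ i) = ∏ t, f (c * t) ^ ((c * t : ZMod p).val ^ i) :=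
    (Equiv.prod_comp (Equiv.mulLeft₀ (c : ZMod p) hc) fun t => f t ^ (t.val ^ i)).symm
  -- only the right-hand occurrence of the product is to be reindexed
  conv_rhs => rw [hre]
  rw [map_prod, ← Finset.prod_zpow, ← Finset.prod_pow, ← Finset.prod_mul_distrib]
  refine Finset.prod_congr rfl fun t _ => ?_
  rw [map_pow, hσ, ← zpow_natCast, ← zpow_mul, ← zpow_natCast, ← zpow_natCast, ← zpow_mul,
    ← zpow_add₀ (hf _)]
  push_cast
  rw [hk]

/-- For distinct odd primes `p, q`, `0 ≤ i ≤ p-2`, `1 ≤ j ≤ q-1`,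
and `c ∈ ℤ` with `p ∤ c`: every field automorphism `σ` of `E = ℚ(ζ_p, ζ_q)`
with `σ(ζ_p) = ζ_p^c` and `σ(ζ_q) = ζ_q` satisfies
`σ(η'_{i,j})^{c^i} · (η'_{i,j})^{-1} ∈ (E^×)^p`. -/
theorem galois_action_on_eta' (p q : ℕ) (hp : p.Prime) (hq : q.Prime)
    (hpo : Odd p) (hqo : Odd q) (hpq : p ≠ q)
    (i j : ℕ) (hi : i ≤ p - 2) (hj1 : 1 ≤ j) (hj : j ≤ q - 1)
    (c : ℤ) (hc : ¬ (p : ℤ) ∣ c)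
    (σ : cycField p q ≃+* cycField p q)
    (hσp : ∀ x : cycField p q, (x : ℂ) = primRoot p → (σ x : ℂ) = primRoot p ^ c)
    (hσq : ∀ x : cycField p q, (x : ℂ) = primRoot q → (σ x : ℂ) = primRoot q)
    (x : cycField p q) (hx : (x : ℂ) = etaElt' p q i j) :
    ∃ w : ℂ, w ∈ cycField p q ∧ w ≠ 0 ∧
      (σ x : ℂ) ^ (c ^ i) = etaElt' p q i j * w ^ p := by
  have : Fact p.Prime := ⟨hp⟩
  have hprim : ∀ m : ℕ, m ≠ 0 → IsPrimitiveRoot (primRoot m) m := fun m hm =>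
    Complex.isPrimitiveRoot_exp m hm
  let a : cycField p q :=
    ⟨primRoot p, IntermediateField.subset_adjoin ℚ _ (Set.mem_insert _ _)⟩
  let b : cycField p q :=
    ⟨primRoot q, IntermediateField.subset_adjoin ℚ _ (Set.mem_insert_of_mem _ rfl)⟩
  have ha : a ^ p = 1 := Subtype.ext (hprim p hp.ne_zero).pow_eq_one
  have hb : IsPrimitiveRoot b q :=
    IsPrimitiveRoot.of_map_of_injective (f := (cycField p q).val) (hprim q hq.ne_zero)
      (cycField p q).val.injective
  have hσa : σ a = a ^ c := Subtype.ext (by rw [hσp a rfl]; exact (map_zpow₀ (cycField p q).val a c).symm)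
  have hσb : σ b = b := Subtype.ext (hσq b rfl)
  let f : ZMod p → cycField p q := fun t => 1 - b ^ j * a ^ t.val
  have hσf : ∀ t, σ (f t) = f (c * t) := by
    intro t
    have h : a ^ (c * (t.val : ℤ)) = a ^ (((c * t : ZMod p).val : ℕ) : ℤ) :=
      zpow_eq_of_zmod_eq ha (by push_cast; rw [ZMod.natCast_zmod_val, ZMod.natCast_zmod_val])
    rw [zpow_natCast, zpow_mul, zpow_natCast] at h
    simp only [f, map_sub, map_one, map_mul, map_pow, hσa, hσb, h]
  have hxf : x = ∏ t, f t ^ (t.val ^ i) := by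
    -- `t ↦ t.val` identifies `ZMod p` with `Finset.range p`
    have h : ∏ t : ZMod p, f t ^ (t.val ^ i)
        = ∏ s ∈ Finset.range p, (1 - b ^ j * a ^ s) ^ (s ^ i) :=
      Finset.prod_bij (fun t _ => t.val) (fun t _ => Finset.mem_range.2 t.val_lt)
        (fun t _ u _ h => ZMod.val_injective p h)
        (fun s hs => ⟨s, Finset.mem_univ _, ZMod.val_cast_of_lt (Finset.mem_range.1 hs)⟩)
        (fun t _ => rfl)
    rw [h]
    apply Subtype.ext
    rw [hx, etaElt']
    simp [a, b]
  obtain ⟨w, hw0, hw⟩ := exists_eq_mul_pow i c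
    (fun h => hc ((ZMod.intCast_zmod_eq_zero_iff_dvd c p).1 h)) σ f
    (fun t => one_sub_ne_zero hp hq hpq hj1 hj ha hb t.val) hσf
  refine ⟨w, w.2, fun h => hw0 (Subtype.ext h), ?_⟩
  rw [← hxf] at hw
  have h := congrArg (cycField p q).val hw
  rw [map_zpow₀, map_mul, map_pow] at h
  rw [← hx]
  exact h
end

section
/- Let $p$ be an odd prime, let $i$ be an integer with $0 \le i \le p-3$, let $b$ be an integer not divisible by $p$ with $b^i \not\equiv 1 \pmod{p}$, let $\nu$ be an integer whose residue generates $(\mathbb{Z}/p\mathbb{Z})^{\times}$, and set $U_i := U_i(\nu)$. Let $F := \mathbb{Q}(\zeta_p + \zeta_p^{-1})$ be the maximal real subfield of $\mathbb{Q}(\zeta_p)$. Then the images of $U_i$ and of $U_i(b)$ in the quotient group $F^{\times}/(F^{\times})^p$ generate the same subgroup; equivalently, there exist an integer $k$ with $p \nmid k$ and $w \in F^{\times}$ with $U_i(b) = U_i^{\,k} \cdot w^p$, and an integer $k'$ with $p \nmid k'$ and $w' \in F^{\times}$ with $U_i = U_i(b)^{\,k'} \cdot w'^p$. -/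
/-- `U_i(b) = ∏_{s=1}^{p-1} (ζ_p^{(p+1)(1-b)s/2} · (1-ζ_p^{bs})/(1-ζ_p^s))^{s^i}`. -/
noncomputable def cycUnit (p i : ℕ) (b : ℤ) : ℂ :=
  ∏ s ∈ Finset.Icc 1 (p - 1),
    (primRoot p ^ ((((p + 1) / 2 : ℕ) : ℤ) * (1 - b) * (s : ℤ)) *
      ((1 - primRoot p ^ (b * (s : ℤ))) / (1 - primRoot p ^ s))) ^ (s ^ i)

/-- The maximal real subfield `F = ℚ(ζ_p + ζ_p⁻¹)` of `ℚ(ζ_p)`, inside `ℂ`. -/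
noncomputable def maxRealSubfield (p : ℕ) : IntermediateField ℚ ℂ :=
  IntermediateField.adjoin ℚ ({primRoot p + (primRoot p)⁻¹} : Set ℂ)

/-! ### The elements `r(t)` of `F` -/

/-- The square root `ζ_p ^ ((p + 1) / 2)` of `ζ_p`, for odd `p`. -/
noncomputable def halfRoot (p : ℕ) : ℂ := primRoot p ^ ((p + 1) / 2)

/-- The real cyclotomic number `(ε ^ t - ε ^ (-t)) / (ε - ε ^ (-1))` with `ε = halfRoot p`, as a
function of the class of `t` modulo `p`; the natural representative `t.val` is used. -/
noncomputable def realCyc (p : ℕ) (a : ZMod p) : ℂ :=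
  (halfRoot p ^ a.val - (halfRoot p)⁻¹ ^ a.val) / (halfRoot p - (halfRoot p)⁻¹)

/-- The product `∏ r(s) ^ (s ^ i)` over the nonzero classes `s` modulo `p`, with `r = realCyc p`. -/
noncomputable def realCycProd (p : ℕ) [NeZero p] (i : ℕ) : ℂ :=
  ∏ a : (ZMod p)ˣ, realCyc p a ^ ((a : ZMod p).val ^ i)

lemma primRoot_isPrimitiveRoot_s10 (p : ℕ) (h0 : p ≠ 0) : IsPrimitiveRoot (primRoot p) p :=
  Complex.isPrimitiveRoot_exp p h0

lemma primRoot_ne_zero (p : ℕ) : primRoot p ≠ 0 := Complex.exp_ne_zero _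

lemma halfRoot_ne_zero (p : ℕ) : halfRoot p ≠ 0 := pow_ne_zero _ (primRoot_ne_zero p)

lemma halfRoot_sq (p : ℕ) (h0 : p ≠ 0) (hpo : Odd p) : halfRoot p ^ 2 = primRoot p := by
  obtain ⟨k, hk⟩ := hpo
  have h1 : (p + 1) / 2 * 2 = p + 1 := by omega
  rw [halfRoot, ← pow_mul, h1, pow_succ, (primRoot_isPrimitiveRoot_s10 p h0).pow_eq_one, one_mul]

lemma halfRoot_pow (p : ℕ) (h0 : p ≠ 0) : halfRoot p ^ p = 1 := by
  rw [halfRoot, ← pow_mul, mul_comm, pow_mul, (primRoot_isPrimitiveRoot_s10 p h0).pow_eq_one, one_pow]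

lemma halfRoot_zpow_add_mul (p : ℕ) (h0 : p ≠ 0) (m k : ℤ) :
    halfRoot p ^ (m + p * k) = halfRoot p ^ m := by
  rw [zpow_add₀ (halfRoot_ne_zero p), zpow_mul, zpow_natCast, halfRoot_pow p h0, one_zpow, mul_one]

lemma halfRoot_zpow_val (p : ℕ) [NeZero p] (n : ℤ) :
    halfRoot p ^ (n : ZMod p).val = halfRoot p ^ n := by
  have h0 : p ≠ 0 := NeZero.ne p
  rw [← zpow_natCast, ZMod.val_intCast]
  conv_rhs => rw [← Int.emod_add_mul_ediv n p]
  rw [halfRoot_zpow_add_mul p h0]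

lemma realCyc_intCast (p : ℕ) [NeZero p] (n : ℤ) :
    realCyc p (n : ZMod p) =
      (halfRoot p ^ n - (halfRoot p ^ n)⁻¹) / (halfRoot p - (halfRoot p)⁻¹) := by
  rw [realCyc, inv_pow, halfRoot_zpow_val]

lemma pow_add_inv_pow_mem {K : IntermediateField ℚ ℂ} {x : ℂ} (hx : x ≠ 0) (h : x + x⁻¹ ∈ K) :
    ∀ n : ℕ, x ^ n + x⁻¹ ^ n ∈ K
  | 0 => by simpa using K.add_mem K.one_mem K.one_mem
  | 1 => by simpa using h
  | n + 2 => by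
    have e : x ^ (n + 2) + x⁻¹ ^ (n + 2) =
        (x + x⁻¹) * (x ^ (n + 1) + x⁻¹ ^ (n + 1)) - (x ^ n + x⁻¹ ^ n) := by
      have : x * x⁻¹ = 1 := mul_inv_cancel₀ hx
      linear_combination (-(x ^ n) - x⁻¹ ^ n) * this
    rw [e]
    exact K.sub_mem (K.mul_mem h (pow_add_inv_pow_mem hx h (n + 1))) (pow_add_inv_pow_mem hx h n)

lemma pow_sub_inv_pow_div_mem {K : IntermediateField ℚ ℂ} {x : ℂ} (hx : x ≠ 0) (h : x + x⁻¹ ∈ K) :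
    ∀ n : ℕ, (x ^ n - x⁻¹ ^ n) / (x - x⁻¹) ∈ K
  | 0 => by simp
  | 1 => by
    rw [pow_one, pow_one]
    -- for `x = ± 1` the quotient takes the junk value `0`
    by_cases h0 : x - x⁻¹ = 0
    · simp [h0]
    · rw [div_self h0]; exact K.one_mem
  | n + 2 => by
    have e : (x ^ (n + 2) - x⁻¹ ^ (n + 2)) / (x - x⁻¹) =
        (x + x⁻¹) * ((x ^ (n + 1) - x⁻¹ ^ (n + 1)) / (x - x⁻¹)) -
          (x ^ n - x⁻¹ ^ n) / (x - x⁻¹) := by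
      have : x * x⁻¹ = 1 := mul_inv_cancel₀ hx
      rw [← mul_div_assoc, ← sub_div]
      congr 1
      linear_combination (-(x ^ n) + x⁻¹ ^ n) * this
    rw [e]
    exact K.sub_mem (K.mul_mem h (pow_sub_inv_pow_div_mem hx h (n + 1)))
      (pow_sub_inv_pow_div_mem hx h n)

lemma realCyc_mem (p : ℕ) (a : ZMod p) : realCyc p a ∈ maxRealSubfield p := by
  apply pow_sub_inv_pow_div_mem (halfRoot_ne_zero p)
  rw [halfRoot, ← inv_pow]
  apply pow_add_inv_pow_mem (primRoot_ne_zero p)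
  exact IntermediateField.subset_adjoin ℚ _ rfl

lemma halfRoot_zpow_sub_inv_ne_zero (p : ℕ) (h0 : p ≠ 0) (hpo : Odd p) (n : ℤ)
    (hn : ¬ (p : ℤ) ∣ n) : halfRoot p ^ n - (halfRoot p ^ n)⁻¹ ≠ 0 := by
  intro h
  have hne : halfRoot p ^ n ≠ 0 := zpow_ne_zero _ (halfRoot_ne_zero p)
  have h1 : (halfRoot p ^ n) ^ 2 = 1 := by
    have : halfRoot p ^ n * (halfRoot p ^ n)⁻¹ = 1 := mul_inv_cancel₀ hne
    linear_combination halfRoot p ^ n * h + this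
  rw [← zpow_natCast, zpow_comm, zpow_natCast, halfRoot_sq p h0 hpo] at h1
  exact hn (((primRoot_isPrimitiveRoot_s10 p h0).zpow_eq_one_iff_dvd n).1 h1)

lemma realCyc_ne_zero (p : ℕ) (hp : p.Prime) (hpo : Odd p) (a : ZMod p) (ha : a ≠ 0) :
    realCyc p a ≠ 0 := by
  have : NeZero p := ⟨hp.ne_zero⟩
  have hden := halfRoot_zpow_sub_inv_ne_zero p hp.ne_zero hpo 1
    (by exact_mod_cast hp.one_lt.ne' ∘ Nat.dvd_one.1)
  rw [zpow_one] at hden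
  obtain ⟨n, rfl⟩ := ZMod.intCast_surjective a
  rw [realCyc_intCast]
  refine div_ne_zero (halfRoot_zpow_sub_inv_ne_zero p hp.ne_zero hpo n ?_) hden
  rwa [Ne, ZMod.intCast_zmod_eq_zero_iff_dvd] at ha

lemma realCycProd_mem (p : ℕ) [NeZero p] (i : ℕ) : realCycProd p i ∈ maxRealSubfield p :=
  prod_mem fun _ _ => pow_mem (realCyc_mem p _) _

lemma realCycProd_ne_zero (p : ℕ) [NeZero p] (hp : p.Prime) (hpo : Odd p) (i : ℕ) :
    realCycProd p i ≠ 0 := by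
  have : Fact p.Prime := ⟨hp⟩
  exact Finset.prod_ne_zero_iff.2 fun a _ =>
    pow_ne_zero _ (realCyc_ne_zero p hp hpo _ a.ne_zero)

/-! ### The product `U_i(b)` in terms of `r` -/

/-- The factor of `U_i(b)` at `s` is `r(b s) / r(s)`, with `r = realCyc p`. -/
lemma cycUnit_factor (p : ℕ) [NeZero p] (hp : p.Prime) (hpo : Odd p) (b : ℤ) (s : ℕ)
    (hs : ¬ (p : ℤ) ∣ s) :
    primRoot p ^ ((((p + 1) / 2 : ℕ) : ℤ) * (1 - b) * (s : ℤ)) *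
      ((1 - primRoot p ^ (b * (s : ℤ))) / (1 - primRoot p ^ s)) =
    realCyc p (b * s : ZMod p) / realCyc p (s : ZMod p) := by
  have e1 : (b * s : ZMod p) = ((b * s : ℤ) : ZMod p) := by push_cast; rfl
  have e2 : (s : ZMod p) = ((s : ℤ) : ZMod p) := by push_cast; rfl
  have hden := halfRoot_zpow_sub_inv_ne_zero p hp.ne_zero hpo 1
    (by exact_mod_cast hp.one_lt.ne' ∘ Nat.dvd_one.1)
  have hs' := halfRoot_zpow_sub_inv_ne_zero p hp.ne_zero hpo s hs
  have hne := halfRoot_ne_zero p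
  rw [zpow_one] at hden
  rw [e1, e2, realCyc_intCast, realCyc_intCast, div_div_div_cancel_right₀ hden]
  have e3 : primRoot p ^ ((((p + 1) / 2 : ℕ) : ℤ) * (1 - b) * (s : ℤ)) =
      halfRoot p ^ (s : ℤ) * (halfRoot p ^ (b * s))⁻¹ := by
    rw [mul_assoc, zpow_mul, zpow_natCast]
    change halfRoot p ^ _ = _
    rw [← zpow_neg, ← zpow_add₀ hne]
    congr 1
    ring
  have e4 (n : ℤ) : primRoot p ^ n = (halfRoot p ^ n) ^ 2 := by
    rw [← halfRoot_sq p hp.ne_zero hpo, ← zpow_natCast, zpow_comm, zpow_natCast]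
  rw [e3, ← zpow_natCast (primRoot p) s, e4, e4]
  have hx : halfRoot p ^ (s : ℤ) ≠ 0 := zpow_ne_zero _ hne
  have hy : halfRoot p ^ (b * (s : ℤ)) ≠ 0 := zpow_ne_zero _ hne
  generalize halfRoot p ^ (s : ℤ) = x at *
  generalize halfRoot p ^ (b * (s : ℤ)) = y at *
  have hx2 : 1 - x ^ 2 ≠ 0 := by
    intro h
    apply hs'
    field_simp
    linear_combination -h
  rw [← mul_div_assoc, div_eq_div_iff hx2 hs']
  field_simp
  ring

lemma cycUnit_eq_prod (p : ℕ) [NeZero p] (hp : p.Prime) (hpo : Odd p) (i : ℕ) (b : ℤ) :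
    cycUnit p i b =
      ∏ a : (ZMod p)ˣ, (realCyc p (b * a) / realCyc p a) ^ ((a : ZMod p).val ^ i) := by
  have : Fact p.Prime := ⟨hp⟩
  have hlt : ∀ s ∈ Finset.Icc 1 (p - 1), 1 ≤ s ∧ s < p := by
    intro s hs
    have := hp.pos
    rw [Finset.mem_Icc] at hs
    omega
  have hdvd : ∀ s ∈ Finset.Icc 1 (p - 1), ¬ p ∣ s := fun s hs =>
    Nat.not_dvd_of_pos_of_lt (hlt s hs).1 (hlt s hs).2
  have hne : ∀ s ∈ Finset.Icc 1 (p - 1), (s : ZMod p) ≠ 0 := fun s hs => by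
    rw [Ne, ZMod.natCast_eq_zero_iff]
    exact hdvd s hs
  refine Finset.prod_bij' (fun (s : ℕ) hs => Units.mk0 (s : ZMod p) (hne s hs))
    (fun a _ => (a : ZMod p).val) (fun _ _ => Finset.mem_univ _) ?_ ?_ ?_ ?_
  · intro a _
    have h1 := (a : ZMod p).val_lt
    have h2 : (a : ZMod p).val ≠ 0 := by simp
    rw [Finset.mem_Icc]
    omega
  · intro s hs
    exact ZMod.val_cast_of_lt (hlt s hs).2
  · intro a _
    ext
    simp
  · intro s hs
    rw [cycUnit_factor p hp hpo b s (by exact_mod_cast hdvd s hs)]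
    simp only [Units.val_mk0]
    rw [ZMod.val_cast_of_lt (hlt s hs).2]

/-! ### Classes modulo `p`-th powers -/

/-- In `K^×`, the class of `x ^ m` modulo `p`-th powers depends only on `m` modulo `p`. -/
lemma exists_zpow_eq_zpow_mul_pow {K : IntermediateField ℚ ℂ} {x : ℂ} (hx : x ≠ 0) (hK : x ∈ K)
    {p : ℕ} {m n : ℤ} (h : (m : ZMod p) = n) :
    ∃ w ∈ K, w ≠ 0 ∧ x ^ m = x ^ n * w ^ p := by
  obtain ⟨l, hl⟩ := (ZMod.intCast_eq_intCast_iff_dvd_sub n m p).1 h.symm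
  refine ⟨x ^ l, zpow_mem hK l, zpow_ne_zero _ hx, ?_⟩
  rw [← zpow_natCast, ← zpow_mul, ← zpow_add₀ hx]
  congr 1
  linear_combination hl

/-- Modulo `p`-th powers of `F^×`, `U_i(b)` is `R ^ (c ^ i - 1)`, where `c` is the least
nonnegative inverse of `b` modulo `p` and `R = realCycProd p i`. -/
lemma cycUnit_eq_zpow (p : ℕ) [NeZero p] (hp : p.Prime) (hpo : Odd p) (i : ℕ) (b : ℤ)
    (hb : ¬ (p : ℤ) ∣ b) :
    ∃ w ∈ maxRealSubfield p, w ≠ 0 ∧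
      cycUnit p i b =
        realCycProd p i ^ ((((b : ZMod p)⁻¹).val : ℤ) ^ i - 1) * w ^ p := by
  have : Fact p.Prime := ⟨hp⟩
  have hb0 : (b : ZMod p) ≠ 0 := by rwa [Ne, ZMod.intCast_zmod_eq_zero_iff_dvd]
  set c : ℕ := ((b : ZMod p)⁻¹).val with hc
  have key : ∀ a : (ZMod p)ˣ, ∃ w ∈ maxRealSubfield p, w ≠ 0 ∧
      realCyc p a ^ (((b : ZMod p)⁻¹ * a).val ^ i) =
        (realCyc p a ^ ((a : ZMod p).val ^ i)) ^ (c ^ i) * w ^ p := by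
    intro a
    have h := exists_zpow_eq_zpow_mul_pow (realCyc_ne_zero p hp hpo _ a.ne_zero)
      (realCyc_mem p a) (p := p) (m := ((((b : ZMod p)⁻¹ * a).val ^ i : ℕ) : ℤ))
      (n := (((a : ZMod p).val ^ i * c ^ i : ℕ) : ℤ))
      (by simp [hc, mul_pow, mul_comm])
    rwa [zpow_natCast, zpow_natCast, pow_mul] at h
  choose w hwm hw0 hw using key
  refine ⟨∏ a, w a, prod_mem fun a _ => hwm a, Finset.prod_ne_zero_iff.2 fun a _ => hw0 a, ?_⟩
  have hR := realCycProd_ne_zero p hp hpo i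
  have hnum : ∏ a : (ZMod p)ˣ, realCyc p (b * a) ^ ((a : ZMod p).val ^ i) =
      ∏ a : (ZMod p)ˣ, realCyc p a ^ (((b : ZMod p)⁻¹ * a).val ^ i) := by
    refine Fintype.prod_equiv (Equiv.mulLeft (Units.mk0 (b : ZMod p) hb0)) _ _ fun a => ?_
    simp [hb0]
  rw [cycUnit_eq_prod p hp hpo]
  simp_rw [div_pow, Finset.prod_div_distrib]
  rw [hnum, Finset.prod_congr rfl fun a _ => hw a, Finset.prod_mul_distrib, Finset.prod_pow,
    Finset.prod_pow]
  change realCycProd p i ^ _ * _ / realCycProd p i = _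
  rw [zpow_sub_one₀ hR, ← Nat.cast_pow, zpow_natCast]
  ring

/-- If `x` and `y` are powers of `R` with exponents prime to `p`, up to `p`-th powers of `K^×`, then `y` is
a power of `x` with exponent prime to `p`, up to `p`-th powers. -/
lemma exists_zpow_mul_pow {K : IntermediateField ℚ ℂ} {p : ℕ} (hp : p.Prime) {R x y v w : ℂ}
    {m n : ℤ} (hR : R ≠ 0) (hRK : R ∈ K) (hv : v ≠ 0) (hvK : v ∈ K) (hw : w ≠ 0) (hwK : w ∈ K)
    (hm : (m : ZMod p) ≠ 0) (hn : (n : ZMod p) ≠ 0) (hx : x = R ^ m * v ^ p)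
    (hy : y = R ^ n * w ^ p) :
    ∃ (k : ℤ) (u : ℂ), ¬ (p : ℤ) ∣ k ∧ u ∈ K ∧ u ≠ 0 ∧ y = x ^ k * u ^ p := by
  have : Fact p.Prime := ⟨hp⟩
  obtain ⟨k, hk⟩ := ZMod.intCast_surjective ((n : ZMod p) / (m : ZMod p))
  obtain ⟨t, htK, ht, h⟩ := exists_zpow_eq_zpow_mul_pow hR hRK (p := p) (m := n) (n := m * k)
    (by push_cast; rw [hk]; field_simp)
  refine ⟨k, t * w * (v ^ k)⁻¹, ?_, K.mul_mem (K.mul_mem htK hwK) (K.inv_mem (zpow_mem hvK k)),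
    mul_ne_zero (mul_ne_zero ht hw) (inv_ne_zero (zpow_ne_zero _ hv)), ?_⟩
  · rw [← ZMod.intCast_zmod_eq_zero_iff_dvd, hk]
    exact div_ne_zero hn hm
  · have e : (v ^ p) ^ k = (v ^ k) ^ p := by
      rw [← zpow_natCast, ← zpow_natCast, zpow_comm]
    have hvk : (v ^ k) ^ p ≠ 0 := pow_ne_zero _ (zpow_ne_zero _ hv)
    rw [hy, hx, h, mul_zpow, e, zpow_mul, mul_pow, mul_pow, inv_pow]
    field_simp

lemma inv_val_pow_sub_one_ne_zero {p : ℕ} (hp : p.Prime) {i : ℕ} {b : ℤ}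
    (h : (b : ZMod p) ^ i ≠ 1) :
    (((((b : ZMod p)⁻¹).val : ℤ) ^ i - 1 : ℤ) : ZMod p) ≠ 0 := by
  have : Fact p.Prime := ⟨hp⟩
  push_cast
  rw [ZMod.natCast_zmod_val, inv_pow, sub_ne_zero]
  simpa using h

/-- For an odd prime `p`, `0 ≤ i ≤ p-3`, `b ∈ ℤ` with `p ∤ b` and
`b^i ≢ 1 (mod p)`, and `ν` a generator of `(ℤ/pℤ)^×`, the images of
`U_i := U_i(ν)` and `U_i(b)` in `F^×/(F^×)^p` generate the same subgroup, where
`F = ℚ(ζ_p + ζ_p⁻¹)`: there are `k, k' ∈ ℤ` not divisible by `p` and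
`w, w' ∈ F^×` with `U_i(b) = U_i^k w^p` and `U_i = U_i(b)^{k'} w'^p`. -/
theorem cycUnit_same_subgroup (p : ℕ) (hp : p.Prime) (hpo : Odd p)
    (i : ℕ) (hi : i ≤ p - 3) (b : ℤ) (hb : ¬ (p : ℤ) ∣ b)
    (hbi : ¬ (p : ℤ) ∣ (b ^ i - 1))
    (ν : ℤ) (hν : ∀ a : ZMod p, a ≠ 0 → ∃ k : ℕ, ((ν : ZMod p)) ^ k = a) :
    (∃ (k : ℤ) (w : ℂ), ¬ (p : ℤ) ∣ k ∧ w ∈ maxRealSubfield p ∧ w ≠ 0 ∧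
      cycUnit p i b = cycUnit p i ν ^ k * w ^ p) ∧
    (∃ (k' : ℤ) (w' : ℂ), ¬ (p : ℤ) ∣ k' ∧ w' ∈ maxRealSubfield p ∧ w' ≠ 0 ∧
      cycUnit p i ν = cycUnit p i b ^ k' * w' ^ p) := by
  have : Fact p.Prime := ⟨hp⟩
  have hb0 : (b : ZMod p) ≠ 0 := by rwa [Ne, ZMod.intCast_zmod_eq_zero_iff_dvd]
  have hbi' : (b : ZMod p) ^ i ≠ 1 := by
    intro h
    apply hbi
    rw [← ZMod.intCast_zmod_eq_zero_iff_dvd]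
    simp [h]
  have hνi : (ν : ZMod p) ^ i ≠ 1 := by
    intro h
    obtain ⟨k, hk⟩ := hν b hb0
    apply hbi'
    rw [← hk, ← pow_mul, mul_comm, pow_mul, h, one_pow]
  have hν0 : ¬ (p : ℤ) ∣ ν := by
    rw [← ZMod.intCast_zmod_eq_zero_iff_dvd]
    intro h
    -- a power of `0` is `0` or `1`, so `b` would be `1` modulo `p`
    obtain ⟨k, hk⟩ := hν b hb0
    have hk0 : k = 0 := by
      by_contra hk0
      rw [h, zero_pow hk0] at hk
      exact hb0 hk.symm
    apply hbi'
    rw [← hk, hk0, pow_zero, one_pow]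
  obtain ⟨w, hwK, hw, ew⟩ := cycUnit_eq_zpow p hp hpo i b hb
  obtain ⟨v, hvK, hv, ev⟩ := cycUnit_eq_zpow p hp hpo i ν hν0
  have hR := realCycProd_ne_zero p hp hpo i
  have hRK := realCycProd_mem p i
  have hb1 := inv_val_pow_sub_one_ne_zero hp hbi'
  have hν1 := inv_val_pow_sub_one_ne_zero hp hνi
  exact ⟨exists_zpow_mul_pow hp hR hRK hv hvK hw hwK hν1 hb1 ev ew,
    exists_zpow_mul_pow hp hR hRK hw hwK hv hvK hb1 hν1 ew ev⟩
end
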